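/- Let F : E^n_(p) → Ω ⊆ ℂ^n be a proper holomorphic map of multiplicity m > 1 admitting a C¹ extension to the closure of E^n_(p), let Γ ⊆ Aut(B^n) be the finite subgroup such that F-relatedness on B^n coincides with the Γ-orbit relation, let P_Γ be the associated proper holomorphic map, and let h ∈ Γ. Suppose B_δ(w_0) ⊆ Ω is an open ball and V_0 ⊆ B^n is an open set such that for every w ∈ B_δ(w_0) the set φ^(p)(F^{-1}(w)) ∩ V_0 is nonempty and the value P_Γ(h(z)) is the same for every z ∈ φ^(p)(F^{-1}(w)) ∩ V_0. Then the single-valued map ψ : B_δ(w_0) → ℂ^n defined by ψ(w) = P_Γ(h(z)) for any z ∈ φ^(p)(F^{-1}(w)) ∩ V_0 is holomorphic. -/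

import Mathlib

/-!
Put `φ = φ^(p)`, `E = E^n_(p)` and `W = E ∩ φ⁻¹(V₀)`. On `W` the hypothesis reads `ψ ∘ F = f` with
`f = P_Γ ∘ γ ∘ φ` holomorphic, and `F(W)` contains the ball `B_δ(w₀)`. So the claim is that a map
whose composition with `F` is holomorphic is itself holomorphic (`differentiableOn_of_comp`).

Two properties of `F` are needed. Its fibres are finite: `φ` sends a fibre into one orbit of the
finite group `Γ`, and `φ` is finite-to-one. Its Jacobian vanishes on no open subset of `E`: it does
not vanish identically, since otherwise Sard's theorem (`measure_image_critSet`) would make the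
nonempty open set `Ω = F(E)` null, and `E` is convex, so that the identity principle applies along
complex lines (`frequently_ne_zero_of_convex`).

Away from the critical values, `ψ = f ∘ F⁻¹` locally, so `ψ` is holomorphic there. The critical
values are handled through complex lines instead of analytic set theory. The critical set is
locally covered by countably many pieces of smooth hypersurfaces, on each of which an iterated
directional derivative of the Jacobian has a simple zero; applying Sard's theorem to `F` modulo a
direction `u` on each piece shows that almost every complex line in the direction `u` contains only
countably many critical values (`thinAlong_zeros`, `dense_countable_slices`). This has two
consequences. Generic real segments avoid the critical values, which implies that `F` is open
(`image_mem_nhds_of_isolated`) and hence that `ψ` is continuous. And on a generic complex line `ψ`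
is continuous and holomorphic off a countable set, hence holomorphic; by locally uniform limits `ψ`
is holomorphic on every complex line. A continuous map that is holomorphic on complex lines is
holomorphic (`differentiableOn_of_lines`).
-/

open Metric Set Filter Topology MeasureTheory

noncomputable section

/-- `ℂⁿ` as a complex Euclidean space. -/
abbrev Cn (n : ℕ) := EuclideanSpace ℂ (Fin n)

/-- Points of the open unit ball `Bⁿ ⊆ ℂⁿ`. -/
abbrev BallPt (n : ℕ) := ↥(Metric.ball (0 : Cn n) 1)

/-- The pseudoellipsoid `E^n_(p)`. -/
def pseudoEllipsoid (n k : ℕ) (hk : k ≤ n) (p : Fin k → ℕ) : Set (Cn n) :=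
  { z | (∑ j : Fin (n - k), ‖z (Fin.castLE (Nat.sub_le n k) j)‖ ^ 2)
      + ∑ i : Fin k, ‖z ⟨n - k + (i : ℕ), by have := i.isLt; omega⟩‖ ^ (2 * p i) < 1 }

/-- The map `φ^(p)`. -/
def phiMap (n k : ℕ) (hk : k ≤ n) (p : Fin k → ℕ) (z : Cn n) : Cn n :=
  (EuclideanSpace.equiv (Fin n) ℂ).symm fun j =>
    if _h : (j : ℕ) < n - k then z j
    else z j ^ (p ⟨(j : ℕ) - (n - k), by have := j.isLt; omega⟩)

/-- `f : D → Ω` is proper: preimages of compact subsets of `Ω` are compact. -/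
def ProperOn (n : ℕ) (f : Cn n → Cn n) (D Ω : Set (Cn n)) : Prop :=
  ∀ K ⊆ Ω, IsCompact K → IsCompact {z ∈ D | f z ∈ K}

/-- Determinant of the complex Jacobian of `f` at `z`. -/
def cDet (n : ℕ) (f : Cn n → Cn n) (z : Cn n) : ℂ :=
  LinearMap.det ((fderiv ℂ f z : Cn n →L[ℂ] Cn n) : Cn n →ₗ[ℂ] Cn n)

/-- The singular locus `Z_F` of `f` in `D`. -/
def singularSet (n : ℕ) (f : Cn n → Cn n) (D : Set (Cn n)) : Set (Cn n) :=
  {z ∈ D | cDet n f z = 0}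

/-- `f : D → Ω` has multiplicity `m`: each fiber over a point outside the
critical value set `f(Z_f)` has cardinality `m`. -/
def HasMultiplicity (n : ℕ) (f : Cn n → Cn n) (D Ω : Set (Cn n)) (m : ℕ) : Prop :=
  ∀ w ∈ Ω \ (f '' singularSet n f D), (D ∩ f ⁻¹' {w}).ncard = m

/-- `f` extends to a `C¹` map on (a neighbourhood of) the closure of `D`. -/
def HasC1Extension (n : ℕ) (f : Cn n → Cn n) (D : Set (Cn n)) : Prop :=
  ∃ (U : Set (Cn n)) (g : Cn n → Cn n), IsOpen U ∧ closure D ⊆ U ∧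
    ContDiffOn ℝ 1 g U ∧ EqOn g f D

/-- Determinant of the real Jacobian `𝕁_f(x)` (ℂⁿ viewed as ℝ²ⁿ). -/
def rDet (n : ℕ) (f : Cn n → Cn n) (x : Cn n) : ℝ :=
  LinearMap.det ((fderiv ℝ f x : Cn n →L[ℝ] Cn n) : Cn n →ₗ[ℝ] Cn n)

/-- Rank of the real Jacobian `𝕁_f(x)`. -/
def rRank (n : ℕ) (f : Cn n → Cn n) (x : Cn n) : ℕ :=
  Module.finrank ℝ (LinearMap.range ((fderiv ℝ f x : Cn n →L[ℝ] Cn n) : Cn n →ₗ[ℝ] Cn n))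

/-- Rank of the complex Jacobian of `f` at `x`. -/
def cRank (n : ℕ) (f : Cn n → Cn n) (x : Cn n) : ℕ :=
  Module.finrank ℂ (LinearMap.range ((fderiv ℂ f x : Cn n →L[ℂ] Cn n) : Cn n →ₗ[ℂ] Cn n))

/-- A permutation of the unit ball which is holomorphic. -/
def IsHoloPerm (n : ℕ) (f : Equiv.Perm (BallPt n)) : Prop :=
  ∃ g : Cn n → Cn n, DifferentiableOn ℂ g (Metric.ball 0 1) ∧
    ∀ z : BallPt n, g (z : Cn n) = (f z : Cn n)

/-- A holomorphic automorphism of the unit ball. -/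
def IsBallAut (n : ℕ) (f : Equiv.Perm (BallPt n)) : Prop :=
  IsHoloPerm n f ∧ IsHoloPerm n f.symm

/-- A finite subgroup of `Aut(Bⁿ)`. -/
def IsFiniteBallAutSubgroup (n : ℕ) (Γ : Subgroup (Equiv.Perm (BallPt n))) : Prop :=
  (Γ : Set (Equiv.Perm (BallPt n))).Finite ∧ ∀ f ∈ Γ, IsHoloPerm n f

/-- A geodesic hyperplane of `Bⁿ`: the image of `{z_n = 0}` by an automorphism. -/
def IsGeodesicHyperplane (n : ℕ) (hn : 0 < n) (H : Set (BallPt n)) : Prop :=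
  ∃ g : Equiv.Perm (BallPt n), IsBallAut n g ∧
    H = g '' {z : BallPt n | (z : Cn n) ⟨n - 1, by omega⟩ = 0}

/-- A reflection of `Bⁿ`: a finite-order automorphism whose fixed point set is a
geodesic hyperplane. -/
def IsReflection (n : ℕ) (hn : 0 < n) (f : Equiv.Perm (BallPt n)) : Prop :=
  IsBallAut n f ∧ IsOfFinOrder f ∧ IsGeodesicHyperplane n hn {z : BallPt n | f z = z}

/-- `Γ_ref`: the subgroup generated by the reflections contained in `Γ`. -/
def reflSubgroup (n : ℕ) (hn : 0 < n) (Γ : Subgroup (Equiv.Perm (BallPt n))) :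
    Subgroup (Equiv.Perm (BallPt n)) :=
  Subgroup.closure {f | f ∈ Γ ∧ IsReflection n hn f}

/-- A ball permutation is represented on the ball by the (unitary) linear isometry `U`. -/
def RepresentsOnBall (n : ℕ) (f : Equiv.Perm (BallPt n)) (U : Cn n ≃ₗᵢ[ℂ] Cn n) : Prop :=
  ∀ z : BallPt n, (f z : Cn n) = U (z : Cn n)

/-- Evaluation of a polynomial in `n` variables at a point of `ℂⁿ`. -/
def evalAt (n : ℕ) (Q : MvPolynomial (Fin n) ℂ) (z : Cn n) : ℂ :=
  MvPolynomial.eval (fun i => z i) Q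

/-- `Q` is invariant under the reflection subgroup `Γ_o,ref = h Γ_ref h⁻¹ ⊆ U(n)`. -/
def IsReflInvariant (n : ℕ) (hn : 0 < n) (Γ : Subgroup (Equiv.Perm (BallPt n)))
    (hmap : Equiv.Perm (BallPt n)) (Q : MvPolynomial (Fin n) ℂ) : Prop :=
  ∀ f ∈ reflSubgroup n hn Γ, ∀ U : Cn n ≃ₗᵢ[ℂ] Cn n,
    RepresentsOnBall n (hmap * f * hmap⁻¹) U →
      ∀ z : Cn n, evalAt n Q (U z) = evalAt n Q z

/-- The data entering the construction of the Chevalley map `P_Γ` associated with a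
finite subgroup `Γ ⊆ Aut(Bⁿ)`: an automorphism `h` carrying a common fixed point `x₀`
of `Γ` to `0` (so that `hΓh⁻¹ ⊆ U(n)`), and a basis `P₁,…,Pₙ` of homogeneous
polynomials for the algebra of `Γ_o,ref`-invariant polynomials. -/
structure ChevalleyData (n : ℕ) (hn : 0 < n) (Γ : Subgroup (Equiv.Perm (BallPt n))) where
  hmap : Equiv.Perm (BallPt n)
  hmap_aut : IsBallAut n hmap
  x0 : BallPt n
  x0_fixed : ∀ f ∈ Γ, f x0 = x0
  hmap_x0 : (hmap x0 : Cn n) = 0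
  conj_unitary : ∀ f ∈ Γ, ∃ U : Cn n ≃ₗᵢ[ℂ] Cn n, RepresentsOnBall n (hmap * f * hmap⁻¹) U
  P : Fin n → MvPolynomial (Fin n) ℂ
  deg : Fin n → ℕ
  homog : ∀ i, (P i).IsHomogeneous (deg i)
  invariant : ∀ i, IsReflInvariant n hn Γ hmap (P i)
  generates : ∀ Q : MvPolynomial (Fin n) ℂ, IsReflInvariant n hn Γ hmap Q →
    ∃ R : MvPolynomial (Fin n) ℂ, Q = MvPolynomial.aeval P R

/-- The proper holomorphic map `P_Γ = (P₁,…,Pₙ) ∘ h : Bⁿ → ℂⁿ` (extended by `0`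
outside the ball). -/
def ChevalleyData.map {n : ℕ} {hn : 0 < n} {Γ : Subgroup (Equiv.Perm (BallPt n))}
    (C : ChevalleyData n hn Γ) : Cn n → Cn n := fun z =>
  letI : Decidable (z ∈ Metric.ball (0 : Cn n) 1) := Classical.dec _
  if hz : z ∈ Metric.ball (0 : Cn n) 1 then
    (EuclideanSpace.equiv (Fin n) ℂ).symm fun i =>
      evalAt n (C.P i) ((C.hmap ⟨z, hz⟩ : BallPt n) : Cn n)
  else 0

/-- The domain `B^n_Γ = P_Γ(Bⁿ)`. -/
def ChevalleyData.image {n : ℕ} {hn : 0 < n} {Γ : Subgroup (Equiv.Perm (BallPt n))}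
    (C : ChevalleyData n hn Γ) : Set (Cn n) :=
  C.map '' Metric.ball 0 1

/-- A biholomorphism from `A` onto `B`. -/
def IsBiholoOn (n : ℕ) (f : Cn n → Cn n) (A B : Set (Cn n)) : Prop :=
  DifferentiableOn ℂ f A ∧ BijOn f A B ∧
    ∃ g : Cn n → Cn n, DifferentiableOn ℂ g B ∧ BijOn g B A ∧ InvOn g f A B

/-- A complex-analytic subvariety `S` of (an open set) `D`: locally the common zero
set of finitely many holomorphic functions. -/
def IsAnalyticSubvariety {E : Type*} [NormedAddCommGroup E] [NormedSpace ℂ E]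
    (D S : Set E) : Prop :=
  S ⊆ D ∧ ∀ x ∈ D, ∃ U : Set E, IsOpen U ∧ x ∈ U ∧ U ⊆ D ∧
    ∃ (N : ℕ) (f : Fin N → E → ℂ), (∀ i, DifferentiableOn ℂ (f i) U) ∧
      S ∩ U = {z ∈ U | ∀ i, f i z = 0}

/-- Two points `y, y'` of `Bⁿ` are `F`-related: they lie in a common set
`φ^(p)(F⁻¹(w))`, `w ∈ Ω`. -/
def FRelated (n k : ℕ) (hk : k ≤ n) (p : Fin k → ℕ) (F : Cn n → Cn n)
    (E Ω : Set (Cn n)) (y y' : Cn n) : Prop :=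
  ∃ w ∈ Ω, y ∈ phiMap n k hk p '' (E ∩ F ⁻¹' {w}) ∧
    y' ∈ phiMap n k hk p '' (E ∩ F ⁻¹' {w})

/-- The correspondence with graph `V ⊆ D × D'` splits at `z₀ ∈ D`. -/
def SplitsAt (n : ℕ) (D D' : Set (Cn n)) (V : Set (Cn n × Cn n)) (z0 : Cn n) : Prop :=
  ∃ U : Set (Cn n), IsOpen U ∧ z0 ∈ U ∧ ∃ (q : ℕ) (g : Fin q → Cn n → Cn n),
    (∀ i, DifferentiableOn ℂ (g i) (U ∩ D) ∧ MapsTo (g i) (U ∩ D) D') ∧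
    ∀ z ∈ U ∩ D, ∀ w ∈ D', ((z, w) ∈ V ↔ ∃ i, g i z = w)

/-- `D` is a bounded domain with smooth boundary: near each boundary point there is a
smooth local defining function with nonvanishing differential. -/
def HasSmoothBoundary (n : ℕ) (D : Set (Cn n)) : Prop :=
  ∀ x ∈ frontier D, ∃ (V : Set (Cn n)) (ρ : Cn n → ℝ), IsOpen V ∧ x ∈ V ∧
    ContDiff ℝ (⊤ : ℕ∞) ρ ∧ (∀ y ∈ V, fderiv ℝ ρ y ≠ 0) ∧
    D ∩ V = {y ∈ V | ρ y < 0} ∧ frontier D ∩ V = {y ∈ V | ρ y = 0}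

end

set_option linter.unusedSectionVars false

/-! ### Holomorphy along complex lines -/

section Holo
variable {X Y : Type*} [NormedAddCommGroup X] [NormedSpace ℂ X]
  [NormedAddCommGroup Y] [NormedSpace ℂ Y]

lemma tendstoLocallyUniformlyOn_of_continuousAt {A : Type*} [TopologicalSpace A]
    {h : A → ℂ → Y} {a : A} {s : Set ℂ} {l : Filter A} (hl : l ≤ 𝓝 a)
    (hc : ∀ t ∈ s, ContinuousAt (fun q : A × ℂ => h q.1 q.2) (a, t)) :
    TendstoLocallyUniformlyOn h (h a) l s := by
  rw [Metric.tendstoLocallyUniformlyOn_iff]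
  intro ε hε t ht
  have h1 := Metric.continuousAt_iff'.1 (hc t ht) (ε / 2) (half_pos hε)
  rw [nhds_prod_eq] at h1
  obtain ⟨S, hS, T, hT, hST⟩ := Filter.eventually_prod_iff.1 h1
  refine ⟨{t | T t}, mem_nhdsWithin_of_mem_nhds hT, ?_⟩
  filter_upwards [hl hS] with b hb t' ht'
  have e1 := hST hb ht'
  have e2 := hST hS.self_of_nhds ht'
  rw [dist_comm] at e1
  calc dist (h a t') (h b t') ≤ dist (h a t') (h a t) + dist (h a t) (h b t') := dist_triangle _ _ _
    _ < ε / 2 + ε / 2 := add_lt_add e2 e1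
    _ = ε := add_halves ε

lemma isOpen_line {U : Set X} (hU : IsOpen U) (x u : X) :
    IsOpen {t : ℂ | x + t • u ∈ U} :=
  hU.preimage (by fun_prop)

/-- The complex derivative of `ψ` at `x` in the direction `u`. -/
noncomputable def lineD (ψ : X → Y) (x u : X) : Y := deriv (fun t : ℂ => ψ (x + t • u)) 0

lemma hasDerivAt_lineD {U : Set X} {ψ : X → Y}
    (hd : ∀ x ∈ U, ∀ u, DifferentiableAt ℂ (fun t : ℂ => ψ (x + t • u)) 0)
    {x u : X} {t : ℂ} (hx : x + t • u ∈ U) :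
    HasDerivAt (fun s : ℂ => ψ (x + s • u)) (lineD ψ (x + t • u) u) t := by
  have h := (hd _ hx u).hasDerivAt
  have h' : HasDerivAt (fun s : ℂ => ψ (x + t • u + s • u)) (lineD ψ (x + t • u) u) (t - t) := by
    simpa [lineD] using h
  have := HasDerivAt.scomp (h := fun s : ℂ => s - t) t h' ((hasDerivAt_id t).sub_const t)
  rw [one_smul] at this
  refine this.congr_of_eventuallyEq (Eventually.of_forall fun s => ?_)
  simp only [Function.comp]
  congr 1
  rw [sub_smul]; abel

variable [CompleteSpace Y]

lemma continuousOn_lineD {U : Set X} (hU : IsOpen U) {ψ : X → Y} (hc : ContinuousOn ψ U)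
    (hd : ∀ x ∈ U, ∀ u, DifferentiableAt ℂ (fun t : ℂ => ψ (x + t • u)) 0) (u : X) :
    ContinuousOn (fun x => lineD ψ x u) U := by
  intro x hx
  refine ContinuousAt.continuousWithinAt ?_
  -- an open product neighbourhood of `(x, 0)` whose image under `(y, t) ↦ y + t • u` lies in `U`
  have hopen : IsOpen {q : X × ℂ | q.1 + q.2 • u ∈ U} := hU.preimage (by fun_prop)
  have hmem : {q : X × ℂ | q.1 + q.2 • u ∈ U} ∈ 𝓝 (x, (0 : ℂ)) :=
    hopen.mem_nhds (by simpa using hx)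
  rw [nhds_prod_eq] at hmem
  obtain ⟨S, hS, T, hT, hST⟩ := Filter.mem_prod_iff.1 hmem
  obtain ⟨V, hVT, hV, h0⟩ := _root_.mem_nhds_iff.1 hT
  have hlu : TendstoLocallyUniformlyOn (fun (y : X) (t : ℂ) => ψ (y + t • u))
      (fun t => ψ (x + t • u)) (𝓝 x) V := by
    refine tendstoLocallyUniformlyOn_of_continuousAt (h := fun (y : X) (t : ℂ) => ψ (y + t • u))
      le_rfl fun t ht => ?_
    have hxt : x + t • u ∈ U := hST (mk_mem_prod (mem_of_mem_nhds hS) (hVT ht))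
    exact ContinuousAt.comp (f := fun q : X × ℂ => q.1 + q.2 • u) (g := ψ)
      (hc.continuousAt (hU.mem_nhds hxt)) (by fun_prop)
  have hdiff : ∀ᶠ y in 𝓝 x, DifferentiableOn ℂ ((fun (y : X) (t : ℂ) => ψ (y + t • u)) y) V := by
    filter_upwards [hS] with y hy t ht
    exact (hasDerivAt_lineD hd (hST (mk_mem_prod hy (hVT ht)))).differentiableAt.differentiableWithinAt
  exact (hlu.deriv hdiff hV).tendsto_at h0

lemma lineD_smul (ψ : X → Y) (x u : X) (c : ℂ)
    (h : DifferentiableAt ℂ (fun t : ℂ => ψ (x + t • u)) 0) :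
    lineD ψ x (c • u) = c • lineD ψ x u := by
  have h' : HasDerivAt (fun s : ℂ => ψ (x + s • u)) (lineD ψ x u) (0 * c) := by
    simpa [lineD] using h.hasDerivAt
  have := HasDerivAt.scomp (0 : ℂ) h' ((hasDerivAt_id (0 : ℂ)).mul_const c)
  rw [one_mul] at this
  rw [lineD, ← this.deriv]
  congr 1
  ext t
  simp [Function.comp, mul_smul]

/-- A continuous map that is holomorphic along complex lines has additive directional
derivatives: on the plane spanned by `u` and `v` its two partial derivatives are continuous. -/
lemma lineD_add {U : Set X} (hU : IsOpen U) {ψ : X → Y} (hc : ContinuousOn ψ U)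
    (hd : ∀ x ∈ U, ∀ u, DifferentiableAt ℂ (fun t : ℂ => ψ (x + t • u)) 0)
    {x : X} (hx : x ∈ U) (u v : X) :
    lineD ψ x (u + v) = lineD ψ x u + lineD ψ x v := by
  have hopen : IsOpen {q : ℂ × ℂ | x + q.1 • u + q.2 • v ∈ U} := hU.preimage (by fun_prop)
  have hmem : ∀ᶠ q : ℂ × ℂ in 𝓝 (0, 0), x + q.1 • u + q.2 • v ∈ U :=
    hopen.mem_nhds (by simpa using hx)
  have hcont : ∀ w, ContinuousAt (fun q : ℂ × ℂ => lineD ψ (x + q.1 • u + q.2 • v) w) (0, 0) := by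
    intro w
    refine ContinuousAt.comp (f := fun q : ℂ × ℂ => x + q.1 • u + q.2 • v)
      (g := fun y => lineD ψ y w) ?_ (by fun_prop)
    exact (continuousOn_lineD hU hc hd w).continuousAt (hU.mem_nhds (by simpa using hx))
  have key := hasStrictFDerivAt_uncurry_coprod (𝕜 := ℂ) (u := ((0 : ℂ), (0 : ℂ)))
    (f := fun s t => ψ (x + s • u + t • v))
    (f₁ := fun s t => ContinuousLinearMap.toSpanSingleton ℂ (lineD ψ (x + s • u + t • v) u))
    (f₂ := fun s t => ContinuousLinearMap.toSpanSingleton ℂ (lineD ψ (x + s • u + t • v) v))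
    (by
      filter_upwards [hmem] with q hq
      have e : ∀ s : ℂ, x + s • u + q.2 • v = x + q.2 • v + s • u := fun s => by abel
      have := hasDerivAt_lineD hd (x := x + q.2 • v) (u := u) (t := q.1) (by rwa [← e])
      have := this.hasFDerivAt
      simp only [← e] at this
      exact this)
    (by
      filter_upwards [hmem] with q hq
      exact (hasDerivAt_lineD hd (x := x + q.1 • u) (u := v) (t := q.2) hq).hasFDerivAt)
    (((ContinuousLinearMap.toSpanSingletonCLE (𝕜 := ℂ) (E := Y)).continuous.continuousAt).comp (hcont u))
    (((ContinuousLinearMap.toSpanSingletonCLE (𝕜 := ℂ) (E := Y)).continuous.continuousAt).comp (hcont v))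
  have hdiag : HasDerivAt (fun t : ℂ => (t, t)) ((1 : ℂ), (1 : ℂ)) 0 :=
    (hasDerivAt_id (0 : ℂ)).prodMk (hasDerivAt_id (0 : ℂ))
  have h2 := HasFDerivAt.comp_hasDerivAt (f := fun t : ℂ => (t, t)) (0 : ℂ) key.hasFDerivAt hdiag
  have h3 := h2.deriv
  simp [Function.HasUncurry.uncurry, Function.comp_def] at h3
  rw [← h3, lineD]
  congr 1
  ext t
  simp [add_assoc]

variable [FiniteDimensional ℂ X]

/-- A continuous map on a finite-dimensional space that is holomorphic along every complex line is
holomorphic: its directional derivatives are linear in the direction and continuous in the point. -/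
theorem differentiableOn_of_lines {U : Set X} (hU : IsOpen U) {ψ : X → Y} (hc : ContinuousOn ψ U)
    (hd : ∀ x ∈ U, ∀ u, DifferentiableAt ℂ (fun t : ℂ => ψ (x + t • u)) 0) :
    DifferentiableOn ℂ ψ U := by
  intro x hx
  refine DifferentiableAt.differentiableWithinAt ?_
  let L : X → X →L[ℂ] Y := fun y =>
    letI := Classical.dec (y ∈ U)
    if hy : y ∈ U then LinearMap.toContinuousLinearMap
      { toFun := lineD ψ y
        map_add' := fun u v => lineD_add hU hc hd hy u v
        map_smul' := fun c u => lineD_smul ψ y u c (hd y hy u) }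
    else 0
  have hL : ∀ y ∈ U, ∀ u, L y u = lineD ψ y u := by
    intro y hy u
    simp [L, hy]
  have hLc : ContinuousOn L U := by
    rw [continuousOn_clm_apply]
    exact fun u => (continuousOn_lineD hU hc hd u).congr fun y hy => hL y hy u
  have hLx := hLc.continuousAt (hU.mem_nhds hx)
  refine ⟨L x, ?_⟩
  rw [hasFDerivAt_iff_isLittleO_nhds_zero, Asymptotics.isLittleO_iff]
  intro ε hε
  obtain ⟨r, hr, hball⟩ := Metric.mem_nhds_iff.1
    (inter_mem (hU.mem_nhds hx) (Metric.continuousAt_iff'.1 hLx ε hε))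
  filter_upwards [Metric.ball_mem_nhds (0 : X) hr] with h hh
  have hmem : ∀ s ∈ Icc (0 : ℝ) 1, x + (s : ℂ) • h ∈ ball x r := by
    intro s hs
    rw [mem_ball_zero_iff] at hh
    rw [mem_ball_iff_norm, add_sub_cancel_left, norm_smul, Complex.norm_real,
      Real.norm_of_nonneg hs.1]
    nlinarith [norm_nonneg h, hs.2]
  have hder : ∀ s ∈ Icc (0 : ℝ) 1, HasDerivWithinAt
      (fun s : ℝ => ψ (x + (s : ℂ) • h) - (s : ℂ) • L x h)
      ((L (x + (s : ℂ) • h) - L x) h) (Icc 0 1) s := by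
    intro s hs
    have hU' := (hball (hmem s hs)).1
    have h1 := (hasDerivAt_lineD hd hU').sub ((hasDerivAt_id (s : ℂ)).smul_const (L x h))
    rw [one_smul, ← hL _ hU'] at h1
    have h2 : HasDerivAt (fun s : ℝ => (s : ℂ)) 1 s := Complex.ofRealCLM.hasDerivAt
    have h3 := HasDerivAt.scomp (h := fun s : ℝ => (s : ℂ)) s h1 h2
    rw [one_smul] at h3
    exact h3.hasDerivWithinAt
  have := norm_image_sub_le_of_norm_deriv_le_segment_01' hder (C := ε * ‖h‖) (by
    intro s hs
    refine (ContinuousLinearMap.le_opNorm _ _).trans ?_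
    gcongr
    have := (hball (hmem s ⟨hs.1, hs.2.le⟩)).2
    rw [mem_ofPred_eq, dist_eq_norm] at this
    exact this.le)
  simpa [sub_right_comm] using this

lemma line_differentiableAt {U : Set X} (hU : IsOpen U) {f : X → Y} (hf : DifferentiableOn ℂ f U) :
    ∀ x ∈ U, ∀ u, DifferentiableAt ℂ (fun t : ℂ => f (x + t • u)) 0 := by
  intro x hx u
  have h1 : DifferentiableAt ℂ f (x + (0 : ℂ) • u) := by
    simpa using hf.differentiableAt (hU.mem_nhds hx)
  exact DifferentiableAt.comp (f := fun t : ℂ => x + t • u) (0 : ℂ) h1 (by fun_prop)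

lemma lineD_eq_fderiv {U : Set X} (hU : IsOpen U) {f : X → Y} (hf : DifferentiableOn ℂ f U)
    {x : X} (hx : x ∈ U) (u : X) : lineD f x u = fderiv ℂ f x u := by
  have h1 : HasFDerivAt f (fderiv ℂ f x) (x + (0 : ℂ) • u) := by
    simpa using (hf.differentiableAt (hU.mem_nhds hx)).hasFDerivAt
  have h2 : HasDerivAt (fun t : ℂ => x + t • u) u 0 := by
    simpa using ((hasDerivAt_id (0 : ℂ)).smul_const u).const_add x
  exact (HasFDerivAt.comp_hasDerivAt (f := fun t : ℂ => x + t • u) (0 : ℂ) h1 h2).deriv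

lemma continuousOn_fderiv_holo {U : Set X} (hU : IsOpen U) {f : X → Y}
    (hf : DifferentiableOn ℂ f U) : ContinuousOn (fderiv ℂ f) U := by
  rw [continuousOn_clm_apply]
  exact fun u => (continuousOn_lineD hU hf.continuousOn (line_differentiableAt hU hf) u).congr
    fun y hy => (lineD_eq_fderiv hU hf hy u).symm

lemma hasStrictFDerivAt_holo {U : Set X} (hU : IsOpen U) {f : X → Y}
    (hf : DifferentiableOn ℂ f U) {x : X} (hx : x ∈ U) :
    HasStrictFDerivAt f (fderiv ℂ f x) x := by
  refine hasStrictFDerivAt_of_hasFDerivAt_of_continuousAt ?_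
    ((continuousOn_fderiv_holo hU hf).continuousAt (hU.mem_nhds hx))
  filter_upwards [hU.mem_nhds hx] with y hy
  exact (hf.differentiableAt (hU.mem_nhds hy)).hasFDerivAt

lemma contDiffAt_holo {U : Set X} (hU : IsOpen U) {f : X → Y}
    (hf : DifferentiableOn ℂ f U) {x : X} (hx : x ∈ U) : ContDiffAt ℂ 1 f x := by
  rw [contDiffAt_one_iff]
  refine ⟨fderiv ℂ f, U, hU.mem_nhds hx, continuousOn_fderiv_holo hU hf, fun y hy => ?_⟩
  exact (hf.differentiableAt (hU.mem_nhds hy)).hasFDerivAt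

/-- A directional derivative of a holomorphic map is holomorphic: along a line it is the locally
uniform limit of difference quotients, and it is continuous. -/
theorem differentiableOn_fderiv_apply {U : Set X} (hU : IsOpen U) {f : X → Y}
    (hf : DifferentiableOn ℂ f U) (u : X) :
    DifferentiableOn ℂ (fun x => fderiv ℂ f x u) U := by
  have hcf := continuousOn_fderiv_holo hU hf
  refine differentiableOn_of_lines hU (hcf.clm_apply continuousOn_const) fun x hx v => ?_
  have hT := isOpen_line hU x v
  set T : Set ℂ := {t : ℂ | x + t • v ∈ U}
  have hlu : TendstoLocallyUniformlyOn
      (fun (s t : ℂ) => s⁻¹ • (f (x + t • v + s • u) - f (x + t • v)))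
      (fun t => fderiv ℂ f (x + t • v) u) (𝓝[≠] 0) T := by
    rw [Metric.tendstoLocallyUniformlyOn_iff]
    intro ε hε t ht
    have hstrict := hasStrictFDerivAt_holo hU hf ht
    have hcont : ContinuousAt (fun t : ℂ => fderiv ℂ f (x + t • v) u) t :=
      ContinuousAt.comp (f := fun t : ℂ => x + t • v) (g := fun y => fderiv ℂ f y u)
        ((hcf.clm_apply continuousOn_const).continuousAt (hU.mem_nhds ht)) (by fun_prop)
    have h1 := Metric.continuousAt_iff'.1 hcont (ε / 2) (half_pos hε)
    set c : ℝ := ε / 2 / (‖u‖ + 1)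
    have hc : 0 < c := by positivity
    have h2 := (hasStrictFDerivAt_iff_isLittleO.1 hstrict).def hc
    have h3 : Tendsto (fun q : ℂ × ℂ => (x + q.2 • v + q.1 • u, x + q.2 • v)) (𝓝 (0, t))
        (𝓝 (x + t • v, x + t • v)) := by
      have : Continuous (fun q : ℂ × ℂ => (x + q.2 • v + q.1 • u, x + q.2 • v)) := by fun_prop
      simpa using this.tendsto (0, t)
    have h4 := h3.eventually h2
    rw [nhds_prod_eq] at h4
    obtain ⟨S, hS, T', hT', hST⟩ := Filter.eventually_prod_iff.1 h4
    refine ⟨_, mem_nhdsWithin_of_mem_nhds (inter_mem h1 hT'), ?_⟩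
    filter_upwards [mem_nhdsWithin_of_mem_nhds hS, self_mem_nhdsWithin] with s hs hs0 t' ht'
    have e1 : dist (fderiv ℂ f (x + t' • v) u) (fderiv ℂ f (x + t • v) u) < ε / 2 := ht'.1
    have e2 := hST hs ht'.2
    simp only [add_sub_cancel_left] at e2
    have e3 : dist (s⁻¹ • (f (x + t' • v + s • u) - f (x + t' • v)))
        (fderiv ℂ f (x + t • v) u) < ε / 2 := by
      have hs0' : s ≠ 0 := hs0
      have : s⁻¹ • (f (x + t' • v + s • u) - f (x + t' • v)) - fderiv ℂ f (x + t • v) u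
          = s⁻¹ • (f (x + t' • v + s • u) - f (x + t' • v) - fderiv ℂ f (x + t • v) (s • u)) := by
        rw [map_smul, smul_sub _ _ (s • _), smul_smul, inv_mul_cancel₀ hs0', one_smul]
      rw [dist_eq_norm, this, norm_smul, norm_inv]
      have hsn : 0 < ‖s‖ := norm_pos_iff.2 hs0'
      calc ‖s‖⁻¹ * ‖_‖ ≤ ‖s‖⁻¹ * (c * ‖s • u‖) := by gcongr
        _ = c * ‖u‖ := by rw [norm_smul]; field_simp
        _ < c * (‖u‖ + 1) := by gcongr; linarith
        _ = ε / 2 := by simp only [c]; field_simp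
    calc dist _ _ ≤ _ := dist_triangle_right _ _ (fderiv ℂ f (x + t • v) u)
      _ < ε / 2 + ε / 2 := add_lt_add e1 e3
      _ = ε := add_halves ε
  -- each difference quotient is holomorphic only where both of its points lie in `U`
  have hopen : IsOpen {q : ℂ × ℂ | x + q.2 • v + q.1 • u ∈ U} := hU.preimage (by fun_prop)
  have hmem : {q : ℂ × ℂ | x + q.2 • v + q.1 • u ∈ U} ∈ 𝓝 ((0 : ℂ), (0 : ℂ)) :=
    hopen.mem_nhds (by simpa using hx)
  rw [nhds_prod_eq] at hmem
  obtain ⟨S, hS, R, hR, hSR⟩ := Filter.mem_prod_iff.1 hmem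
  obtain ⟨V, hVR, hV, h0⟩ := _root_.mem_nhds_iff.1 hR
  have hlu' := hlu.mono (inter_subset_left : T ∩ V ⊆ T)
  have hdiff := hlu'.differentiableOn (by
    filter_upwards [mem_nhdsWithin_of_mem_nhds hS] with s hs t ht
    have ha : DifferentiableAt ℂ f (x + t • v + s • u) :=
      hf.differentiableAt (hU.mem_nhds (hSR (mk_mem_prod hs (hVR ht.2))))
    have hb : DifferentiableAt ℂ f (x + t • v) := hf.differentiableAt (hU.mem_nhds ht.1)
    have ha' := DifferentiableAt.comp (f := fun t : ℂ => x + t • v + s • u) t ha (by fun_prop)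
    have hb' := DifferentiableAt.comp (f := fun t : ℂ => x + t • v) t hb (by fun_prop)
    exact ((ha'.sub hb').const_smul s⁻¹).differentiableWithinAt) (hT.inter hV)
  exact hdiff.differentiableAt ((hT.inter hV).mem_nhds ⟨by simpa [T] using hx, h0⟩)

end Holo

/-! ### Critical points and Sard's theorem -/

section Crit
variable {X : Type*} [NormedAddCommGroup X] [NormedSpace ℂ X] [FiniteDimensional ℂ X]

/-- The critical set of `F` in `U`. -/
def critSet (F : X → X) (U : Set X) : Set X := {x ∈ U | (fderiv ℂ F x).det = 0}

lemma restrictScalars_det_eq_zero (A : X →L[ℂ] X) (h : A.det = 0) :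
    (A.restrictScalars ℝ).det = 0 := by
  have : ((A : X →ₗ[ℂ] X).restrictScalars ℝ).det = Algebra.norm ℝ (A : X →ₗ[ℂ] X).det :=
    LinearMap.det_restrictScalars
  have h' : LinearMap.det (A : X →ₗ[ℂ] X) = 0 := h
  rw [h', Algebra.norm_zero] at this
  exact this

lemma isolated_of_det_ne_zero {F : X → X} {x : X} (hF : DifferentiableAt ℂ F x)
    (h : (fderiv ℂ F x).det ≠ 0) (w : X) : ∀ᶠ z in 𝓝[≠] x, F z ≠ w := by
  refine hF.hasFDerivAt.eventually_ne ?_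
  rw [← ContinuousLinearMap.coe_toContinuousLinearEquivOfDetNeZero _ h]
  exact ⟨_, ContinuousLinearEquiv.antilipschitz _⟩

/-- The holomorphic inverse function theorem: near a point where the Jacobian does not vanish, `F` has
a holomorphic local inverse `χ`. -/
lemma exists_local_inverse {F : X → X} {U : Set X} (hU : IsOpen U)
    (hF : DifferentiableOn ℂ F U) {x : X} (hx : x ∈ U) (h : (fderiv ℂ F x).det ≠ 0) :
    ∃ χ : X → X, χ (F x) = x ∧ (∀ᶠ w in 𝓝 (F x), DifferentiableAt ℂ χ w) ∧
      (∀ᶠ w in 𝓝 (F x), F (χ w) = w) ∧ ∀ᶠ y in 𝓝 x, χ (F y) = y := by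
  have h1 := contDiffAt_holo hU hF hx
  have h2 : HasFDerivAt F
      (((fderiv ℂ F x).toContinuousLinearEquivOfDetNeZero h : X ≃L[ℂ] X) : X →L[ℂ] X) x := by
    rw [ContinuousLinearMap.coe_toContinuousLinearEquivOfDetNeZero]
    exact (hF.differentiableAt (hU.mem_nhds hx)).hasFDerivAt
  have h3 := h1.hasStrictFDerivAt' h2 one_ne_zero
  refine ⟨h1.localInverse h2 one_ne_zero, h1.localInverse_apply_image h2 one_ne_zero, ?_,
    h3.eventually_right_inverse, h3.eventually_left_inverse⟩
  filter_upwards [(h1.to_localInverse h2 one_ne_zero).eventually (by simp)] with w hw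
  exact hw.differentiableAt one_ne_zero

lemma countable_of_isolated {R : Set X} (h : ∀ y ∈ R, ∀ᶠ z in 𝓝[≠] y, z ∉ R) : R.Countable := by
  have : SecondCountableTopology X := by
    have := FiniteDimensional.proper ℂ X
    infer_instance
  refine (HereditarilyLindelofSpace.isLindelof R).induction_on (p := Set.Countable)
    (fun s t hst ht => ht.mono hst) (fun S hS h => hS.sUnion h) fun y hy => ?_
  refine ⟨{y}, ?_, countable_singleton y⟩
  have := h y hy
  rw [eventually_nhdsWithin_iff] at this
  rw [mem_nhdsWithin_iff_eventually]
  filter_upwards [this] with z hz hzR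
  by_contra hne
  exact hz hne hzR

variable [MeasurableSpace X] [BorelSpace X] (μ : Measure X) [μ.IsAddHaarMeasure]

/-- The equidimensional case of Sard's theorem. -/
lemma measure_image_critSet {F : X → X} {U : Set X} (hU : IsOpen U)
    (hF : DifferentiableOn ℂ F U) : μ (F '' critSet F U) = 0 := by
  refine addHaar_image_eq_zero_of_det_fderivWithin_eq_zero μ
    (f' := fun x => (fderiv ℂ F x).restrictScalars ℝ) (fun x hx => ?_) fun x hx => ?_
  · exact ((hF.differentiableAt (hU.mem_nhds hx.1)).hasFDerivAt.restrictScalars ℝ).hasFDerivWithinAt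
  · exact restrictScalars_det_eq_zero _ hx.2

/-- `S` is thin for `F` in the direction `u`: for almost every `w`, only countably many points
of `S` are mapped by `F` to the complex line through `w` in the direction `u`. -/
def ThinAlong (F : X → X) (u : X) (S : Set X) : Prop :=
  ∀ᵐ w ∂μ, {x ∈ S | ∃ t : ℂ, F x = w + t • u}.Countable

variable {μ}

lemma ThinAlong.mono {F : X → X} {u : X} {S T : Set X} (h : S ⊆ T) (hT : ThinAlong μ F u T) :
    ThinAlong μ F u S := by
  filter_upwards [hT] with w hw
  refine hw.mono ?_
  rintro x ⟨hx, hx'⟩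
  exact ⟨h hx, hx'⟩

lemma ThinAlong.sUnion {F : X → X} {u : X} {S : Set (Set X)} (hS : S.Countable)
    (h : ∀ s ∈ S, ThinAlong μ F u s) : ThinAlong μ F u (⋃₀ S) := by
  have := (ae_ball_iff hS).2 h
  filter_upwards [this] with w hw
  refine (hS.biUnion hw).mono ?_
  rintro x ⟨⟨s, hs, hxs⟩, hx⟩
  exact mem_biUnion hs ⟨hxs, hx⟩

lemma ThinAlong.of_locally {F : X → X} {u : X} {S : Set X}
    (h : ∀ x ∈ S, ∃ t ∈ 𝓝[S] x, ThinAlong μ F u t) : ThinAlong μ F u S := by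
  have : SecondCountableTopology X := by
    have := FiniteDimensional.proper ℂ X
    infer_instance
  exact (HereditarilyLindelofSpace.isLindelof S).induction_on
    (fun s t hst ht => ht.mono hst) (fun S hS h => ThinAlong.sUnion hS h) h

/-- Near a point where the holomorphic function `G` has a nonzero derivative in the direction `v`,
its zero set is thin. The zero set is straightened by `Ψ`, and Sard's lemma is applied to the map `Φ` which
is `F` modulo `u` on the straightened hypersurface and sends the direction `v` to `u`. -/
lemma thinAlong_of_simple_zero {F : X → X} {G : X → ℂ} {U : Set X} (hU : IsOpen U)
    (hF : DifferentiableOn ℂ F U) (hG : DifferentiableOn ℂ G U) {x₀ v u : X} (hu : u ≠ 0)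
    (hx₀ : x₀ ∈ U) (h1 : fderiv ℂ G x₀ v ≠ 0) :
    ∃ N ∈ 𝓝 x₀, ThinAlong μ F u {x ∈ N | G x = 0} := by
  obtain ⟨m, hm⟩ : ∃ m : X →L[ℂ] ℂ, m u = 1 := SeparatingDual.exists_eq_one hu
  set c := fderiv ℂ G x₀ v with hc
  let l : X →L[ℂ] ℂ := c⁻¹ • fderiv ℂ G x₀
  have hlv : l v = 1 := by simp [l, ← hc, h1]
  let Ψ : X → X := fun x => x + (c⁻¹ * G x - l x) • v
  have hΨd : DifferentiableOn ℂ Ψ U := by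
    intro x hx
    have := hG x hx
    fun_prop
  have hΨ' : HasFDerivAt Ψ (ContinuousLinearMap.id ℂ X) x₀ := by
    have hg := (hG.differentiableAt (hU.mem_nhds hx₀)).hasFDerivAt
    have h2 := (hasFDerivAt_id x₀).add
      (((hg.const_mul c⁻¹).sub l.hasFDerivAt).smul_const v)
    refine h2.congr_fderiv ?_
    ext y
    simp [l]
  obtain ⟨χ, hχ0, hχd, -, hχl⟩ := exists_local_inverse hU hΨd hx₀
    (by rw [hΨ'.fderiv]; simp [ContinuousLinearMap.det])
  have hχc : ContinuousAt χ (Ψ x₀) := hχd.self_of_nhds.continuousAt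
  have hχU : ∀ᶠ y in 𝓝 (Ψ x₀), χ y ∈ U := hχc (by rw [hχ0]; exact hU.mem_nhds hx₀)
  obtain ⟨V, hVsub, hV, hxV⟩ := _root_.mem_nhds_iff.1 (hχd.and hχU)
  have hΨc : ContinuousAt Ψ x₀ := hΨ'.continuousAt
  let π : X → X := fun y => y - l y • v
  let Φ : X → X := fun y => F (χ (π y)) - m (F (χ (π y))) • u + l y • u
  have hD : IsOpen (π ⁻¹' V) := hV.preimage (by fun_prop)
  have hΦ : DifferentiableOn ℂ Φ (π ⁻¹' V) := by
    intro y hy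
    refine DifferentiableAt.differentiableWithinAt ?_
    have a1 : DifferentiableAt ℂ π y := by fun_prop
    have a2 : DifferentiableAt ℂ χ (π y) := (hVsub hy).1
    have a3 : DifferentiableAt ℂ F (χ (π y)) := hF.differentiableAt (hU.mem_nhds (hVsub hy).2)
    have a4 : DifferentiableAt ℂ (fun y => F (χ (π y))) y :=
      DifferentiableAt.comp (f := fun y => χ (π y)) y a3 (DifferentiableAt.comp y a2 a1)
    fun_prop
  refine ⟨{x | χ (Ψ x) = x ∧ Ψ x ∈ V}, hχl.and (hΨc (hV.mem_nhds hxV)), ?_⟩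
  have hnull : ∀ᵐ w ∂μ, w ∉ Φ '' critSet Φ (π ⁻¹' V) :=
    measure_eq_zero_iff_ae_notMem.1 (measure_image_critSet μ hD hΦ)
  filter_upwards [hnull] with w hw
  have hR : {y ∈ π ⁻¹' V | Φ y = w}.Countable := by
    refine countable_of_isolated fun y hy => ?_
    have hdet : (fderiv ℂ Φ y).det ≠ 0 := fun h => hw ⟨y, ⟨hy.1, h⟩, hy.2⟩
    filter_upwards [isolated_of_det_ne_zero (hΦ.differentiableAt (hD.mem_nhds hy.1)) hdet w]
      with z hz hz'
    exact hz hz'.2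
  refine (hR.image fun y => χ (π y)).mono ?_
  rintro x ⟨⟨⟨hxχ, hxV'⟩, hGx⟩, t, ht⟩
  have hlx : l (Ψ x) = 0 := by simp [Ψ, hGx, hlv]
  have hπ : π (Ψ x + m w • v) = Ψ x := by simp [π, hlx, hlv]
  refine ⟨Ψ x + m w • v, ⟨?_, ?_⟩, ?_⟩
  · rwa [mem_preimage, hπ]
  · simp only [Φ, hπ, hxχ, ht]
    simp only [map_add, map_smul, hlx, hlv, hm, smul_eq_mul, mul_one, zero_add, add_smul]
    abel
  · simp only [hπ, hxχ]

/-- The `j`-th derivative of `g` in the direction `v`. -/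
noncomputable def iterD (v : X) (g : X → ℂ) : ℕ → X → ℂ
  | 0 => g
  | j + 1 => fun x => fderiv ℂ (iterD v g j) x v

lemma differentiableOn_iterD {U : Set X} (hU : IsOpen U) {g : X → ℂ} (hg : DifferentiableOn ℂ g U)
    (v : X) (j : ℕ) : DifferentiableOn ℂ (iterD v g j) U := by
  induction j with
  | zero => exact hg
  | succ j ih => exact differentiableOn_fderiv_apply hU ih v

lemma iteratedDeriv_line {U : Set X} (hU : IsOpen U) {g : X → ℂ} (hg : DifferentiableOn ℂ g U)
    (x v : X) (j : ℕ) : ∀ t : ℂ, x + t • v ∈ U →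
      iteratedDeriv j (fun t : ℂ => g (x + t • v)) t = iterD v g j (x + t • v) := by
  induction j with
  | zero => intro t _; simp [iterD]
  | succ j ih =>
    intro t ht
    rw [iteratedDeriv_succ]
    have hev : iteratedDeriv j (fun t : ℂ => g (x + t • v)) =ᶠ[𝓝 t]
        fun t => iterD v g j (x + t • v) := by
      filter_upwards [(isOpen_line hU x v).mem_nhds ht] with s hs using ih s hs
    rw [hev.deriv_eq]
    have hd := differentiableOn_iterD hU hg v j
    rw [(hasDerivAt_lineD (line_differentiableAt hU hd) ht).deriv, lineD_eq_fderiv hU hd ht]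
    rfl

/-- At every point, a holomorphic function which is not locally zero has a nonzero iterated
derivative in some direction. -/
lemma exists_iterD_ne_zero {U : Set X} (hU : IsOpen U) {g : X → ℂ} (hg : DifferentiableOn ℂ g U)
    {x : X} (hx : x ∈ U) (hne : ∃ᶠ y in 𝓝 x, g y ≠ 0) : ∃ v j, iterD v g j x ≠ 0 := by
  obtain ⟨r, hr, hball⟩ := Metric.isOpen_iff.1 hU x hx
  obtain ⟨y, hy, hyr⟩ := (hne.and_eventually (ball_mem_nhds x hr)).exists
  by_contra! hcon
  by_cases hyx : y = x
  · exact hy (hyx ▸ hcon 0 0)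
  have hn : 0 < ‖y - x‖ := norm_pos_iff.2 (sub_ne_zero.2 hyx)
  have hmem : ∀ t ∈ ball (0 : ℂ) (r / ‖y - x‖), x + t • (y - x) ∈ U := by
    intro t ht
    refine hball ?_
    rw [mem_ball_iff_norm, add_sub_cancel_left, norm_smul]
    rwa [mem_ball_zero_iff, lt_div_iff₀ hn] at ht
  have hd : DifferentiableOn ℂ (fun t : ℂ => g (x + t • (y - x))) (ball 0 (r / ‖y - x‖)) :=
    fun t ht => (hasDerivAt_lineD (line_differentiableAt hU hg)
      (hmem t ht)).differentiableAt.differentiableWithinAt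
  have h1 : (1 : ℂ) ∈ ball (0 : ℂ) (r / ‖y - x‖) := by
    rw [mem_ball_zero_iff, norm_one, one_lt_div hn, ← mem_ball_iff_norm]
    exact hyr
  have := Complex.taylorSeries_eq_on_ball hd h1
  have hz : ∀ j, iteratedDeriv j (fun t : ℂ => g (x + t • (y - x))) 0 = 0 := by
    intro j
    rw [iteratedDeriv_line hU hg x (y - x) j 0 (by simpa using hx), zero_smul, add_zero]
    exact hcon _ _
  simp only [hz, smul_zero, tsum_zero, one_smul] at this
  rw [add_sub_cancel] at this
  exact hy this.symm

/-- The zero set of a holomorphic function that vanishes on no open set is thin: it is locally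
covered by countably many sets on which an iterated directional derivative has a simple zero. -/
theorem thinAlong_zeros {F : X → X} {g : X → ℂ} {U : Set X} (hU : IsOpen U)
    (hF : DifferentiableOn ℂ F U) (hg : DifferentiableOn ℂ g U) {u : X} (hu : u ≠ 0)
    (hne : ∀ x ∈ U, ∃ᶠ y in 𝓝 x, g y ≠ 0) : ThinAlong μ F u {x ∈ U | g x = 0} := by
  have hsimple : ∀ v j, ThinAlong μ F u
      {x ∈ U | iterD v g j x = 0 ∧ iterD v g (j + 1) x ≠ 0} := by
    intro v j
    refine ThinAlong.of_locally fun x hx => ?_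
    obtain ⟨N, hN, hthin⟩ := thinAlong_of_simple_zero (μ := μ) hU hF
      (differentiableOn_iterD hU hg v j) hu hx.1 hx.2.2
    refine ⟨_, inter_mem_nhdsWithin _ hN, hthin.mono ?_⟩
    rintro y ⟨hy, hyN⟩
    exact ⟨hyN, hy.2.1⟩
  refine ThinAlong.of_locally fun x hx => ?_
  obtain ⟨v, k, hk⟩ := exists_iterD_ne_zero hU hg hx.1 (hne x hx.1)
  have hev : ∀ᶠ y in 𝓝 x, iterD v g k y ≠ 0 :=
    ((differentiableOn_iterD hU hg v k).continuousOn.continuousAt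
      (hU.mem_nhds hx.1)).eventually_ne hk
  refine ⟨_, inter_mem_nhdsWithin _ hev, ?_⟩
  refine ThinAlong.mono ?_ (ThinAlong.sUnion
    (countable_range fun j => {x ∈ U | iterD v g j x = 0 ∧ iterD v g (j + 1) x ≠ 0})
    (by rintro _ ⟨j, rfl⟩; exact hsimple v j))
  rintro y ⟨⟨hyU, hy0⟩, hyk⟩
  -- if `y` lay in none of these sets, all its iterated derivatives would vanish by induction
  by_contra hcon
  have hall : ∀ j, iterD v g j y = 0 := by
    intro j
    induction j with
    | zero => exact hy0
    | succ j ih =>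
      by_contra hj
      exact hcon ⟨_, ⟨j, rfl⟩, hyU, ih, hj⟩
  exact hyk (hall k)

end Crit

/-! ### Openness and descent of holomorphy -/

section Extension
variable {X : Type*} [NormedAddCommGroup X] [NormedSpace ℂ X] [FiniteDimensional ℂ X]

lemma differentiableOn_det_fderiv {F : X → X} {U : Set X} (hU : IsOpen U)
    (hF : DifferentiableOn ℂ F U) : DifferentiableOn ℂ (fun x => (fderiv ℂ F x).det) U := by
  let b := Module.finBasis ℂ X
  have h : ∀ x, (fderiv ℂ F x).det =
      (LinearMap.toMatrix b b (fderiv ℂ F x : X →ₗ[ℂ] X)).det := fun x =>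
    (LinearMap.det_toMatrix b _).symm
  simp only [h, Matrix.det_apply, LinearMap.toMatrix_apply, ContinuousLinearMap.coe_coe]
  refine DifferentiableOn.fun_sum fun σ _ => DifferentiableOn.const_smul ?_ _
  have hentry : ∀ i, DifferentiableOn ℂ (fun x => b.repr (fderiv ℂ F x (b i)) (σ i)) U := by
    intro i
    let l : X →L[ℂ] ℂ := LinearMap.toContinuousLinearMap (b.coord (σ i))
    exact l.differentiable.comp_differentiableOn (differentiableOn_fderiv_apply hU hF (b i))
  exact fun x hx => (HasFDerivWithinAt.finsetProd
    fun i _ => (hentry i x hx).hasFDerivWithinAt).differentiableWithinAt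

/-- For a dense set of base points, the complex line in the direction `u` contains only countably
many critical values. -/
lemma dense_countable_slices {F : X → X} {U : Set X} (hU : IsOpen U)
    (hF : DifferentiableOn ℂ F U) (hne : ∀ x ∈ U, ∃ᶠ y in 𝓝 x, (fderiv ℂ F y).det ≠ 0)
    {u : X} (hu : u ≠ 0) :
    Dense {w : X | {t : ℂ | w + t • u ∈ F '' critSet F U}.Countable} := by
  let _ : MeasurableSpace X := borel X
  have : BorelSpace X := ⟨rfl⟩
  have : ProperSpace X := FiniteDimensional.proper ℂ X
  have : FiniteDimensional ℝ X := FiniteDimensional.complexToReal X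
  have h := thinAlong_zeros (μ := (Measure.addHaar : Measure X)) hU hF
    (differentiableOn_det_fderiv hU hF) hu hne
  refine (Measure.dense_of_ae h).mono fun w hw => ?_
  have hw' : {x ∈ critSet F U | ∃ t : ℂ, F x = w + t • u}.Countable := hw
  have hinj : Function.Injective fun t : ℂ => w + t • u := fun s t hst =>
    smul_left_injective ℂ hu (add_left_cancel hst)
  refine ((hw'.image F).preimage hinj).mono ?_
  rintro t ⟨x, hx, hxt⟩
  exact ⟨x, ⟨hx, t, hxt⟩, hxt⟩

/-- For a dense set of base points, the real line in the direction `u` contains no critical value: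
a countable subset of a complex line misses almost all of the real lines parallel to a given one. -/
lemma dense_real_lines_avoid {F : X → X} {U : Set X} (hU : IsOpen U)
    (hF : DifferentiableOn ℂ F U) (hne : ∀ x ∈ U, ∃ᶠ y in 𝓝 x, (fderiv ℂ F y).det ≠ 0)
    {u : X} (hu : u ≠ 0) : Dense {w : X | ∀ s : ℝ, w + (s : ℂ) • u ∉ F '' critSet F U} := by
  rw [← dense_closure]
  refine (dense_countable_slices hU hF hne hu).mono fun w hw => ?_
  have hw' : {t : ℂ | w + t • u ∈ F '' critSet F U}.Countable := hw
  have hd := (hw'.image Complex.im).dense_compl ℝ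
  have hcont : Continuous fun η : ℝ => w + ((η : ℂ) * Complex.I) • u := by fun_prop
  have hmem : (0 : ℝ) ∈ closure (Complex.im '' {t : ℂ | w + t • u ∈ F '' critSet F U})ᶜ := hd 0
  have := map_mem_closure hcont hmem
    (t := {w : X | ∀ s : ℝ, w + (s : ℂ) • u ∉ F '' critSet F U}) ?_
  · simpa using this
  · intro η hη s hs
    refine hη ⟨(η : ℂ) * Complex.I + s, ?_, by simp⟩
    change w + ((η : ℂ) * Complex.I + s) • u ∈ F '' critSet F U
    rwa [add_smul, ← add_assoc]

/-- A holomorphic map whose Jacobian vanishes on no open set is open at isolated points of its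
fibres. The image of a small closed ball is compact; it has no boundary points near the centre
outside the critical values, and these cannot separate since generic real lines avoid them. -/
lemma image_mem_nhds_of_isolated {F : X → X} {U : Set X} (hU : IsOpen U)
    (hF : DifferentiableOn ℂ F U) (hne : ∀ x ∈ U, ∃ᶠ y in 𝓝 x, (fderiv ℂ F y).det ≠ 0)
    {x : X} (hx : x ∈ U) (hiso : ∀ᶠ y in 𝓝[≠] x, F y ≠ F x) {V : Set X} (hV : V ∈ 𝓝 x) :
    F '' V ∈ 𝓝 (F x) := by
  have : ProperSpace X := FiniteDimensional.proper ℂ X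
  rw [eventually_nhdsWithin_iff] at hiso
  obtain ⟨r, hr, hrsub⟩ := nhds_basis_closedBall.mem_iff.1
    (inter_mem (inter_mem (hU.mem_nhds hx) hV) hiso)
  set K := closedBall x r with hK
  have hKU : K ⊆ U := fun y hy => (hrsub hy).1.1
  have hKV : K ⊆ V := fun y hy => (hrsub hy).1.2
  have hcont : ContinuousOn F K := hF.continuousOn.mono hKU
  have hAc : IsCompact (F '' K) := (isCompact_closedBall x r).image_of_continuousOn hcont
  have hSc : IsCompact (F '' sphere x r) :=
    (isCompact_sphere x r).image_of_continuousOn (hcont.mono sphere_subset_closedBall)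
  have hFx : F x ∉ F '' sphere x r := by
    rintro ⟨y, hy, hyx⟩
    refine (hrsub (sphere_subset_closedBall hy)).2 ?_ hyx
    rintro rfl
    simp [hr.ne] at hy
  obtain ⟨ρ, hρ, hρsub⟩ := Metric.isOpen_iff.1 hSc.isClosed.isOpen_compl (F x) hFx
  -- images of noncritical points of the interior of `K` are interior to `F '' K`
  have hopen : ∀ y ∈ ball x r, (fderiv ℂ F y).det ≠ 0 → F y ∈ interior (F '' K) := by
    intro y hy hdet
    obtain ⟨χ, hχ, hχd, hχr, -⟩ := exists_local_inverse hU hF (hKU (ball_subset_closedBall hy)) hdet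
    rw [mem_interior_iff_mem_nhds]
    have hev : ∀ᶠ w in 𝓝 (F y), χ w ∈ ball x r :=
      hχd.self_of_nhds.continuousAt (by rw [hχ]; exact isOpen_ball.mem_nhds hy)
    filter_upwards [hχr, hev] with w h1 h2
    exact ⟨χ w, ball_subset_closedBall h2, h1⟩
  have hint : ∀ b ∈ F '' K, b ∈ ball (F x) ρ → b ∉ F '' critSet F U → b ∈ interior (F '' K) := by
    rintro _ ⟨y, hy, rfl⟩ hb hbZ
    have hyb : y ∈ ball x r := by
      rw [mem_ball]
      refine lt_of_le_of_ne hy fun h => ?_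
      exact hρsub hb ⟨y, h, rfl⟩
    exact hopen y hyb fun h => hbZ ⟨y, ⟨hKU hy, h⟩, rfl⟩
  obtain ⟨y, hydet, hyr, hyρ⟩ : ∃ y, (fderiv ℂ F y).det ≠ 0 ∧ y ∈ ball x r ∧
      F y ∈ ball (F x) ρ := by
    have hc : ContinuousAt F x := hF.continuousOn.continuousAt (hU.mem_nhds hx)
    exact ((hne x hx).and_eventually (inter_mem (ball_mem_nhds x hr)
      (hc (ball_mem_nhds (F x) hρ)))).exists
  set a := F y with ha
  have haint : a ∈ interior (F '' K) := hopen y hyr hydet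
  refine mem_of_superset (ball_mem_nhds (F x) hρ) fun b hb => ?_
  refine image_mono hKV ?_
  by_cases hab : b - a = 0
  · rw [sub_eq_zero.1 hab]
    exact interior_subset haint
  set u := b - a with hu
  have hD := dense_real_lines_avoid hU hF hne hab
  set D := {w : X | ∀ s : ℝ, w + (s : ℂ) • u ∉ F '' critSet F U} with hDdef
  -- the starting points of translated segments staying in the small ball
  have hN : interior (F '' K) ∩ ball (F x) ρ ∩ {w | w + u ∈ ball (F x) ρ} ∈ 𝓝 a := by
    refine inter_mem (inter_mem (isOpen_interior.mem_nhds haint) (isOpen_ball.mem_nhds hyρ)) ?_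
    have hc : Continuous fun w : X => w + u := by fun_prop
    refine (isOpen_ball.preimage hc).mem_nhds ?_
    simpa [hu] using hb
  have key : ∀ w ∈ D ∩ (interior (F '' K) ∩ ball (F x) ρ ∩ {w | w + u ∈ ball (F x) ρ}),
      w + u ∈ F '' K := by
    rintro w ⟨hwD, ⟨hwi, hwb⟩, hwu⟩
    have hwu : w + u ∈ ball (F x) ρ := hwu
    let T : Set X := (fun s : ℝ => w + (s : ℂ) • u) '' Icc 0 1
    have hT : IsPreconnected T := isPreconnected_Icc.image _ (by fun_prop)
    have hTball : T ⊆ ball (F x) ρ := by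
      rintro _ ⟨s, hs, rfl⟩
      have hcv := (convex_ball (F x) ρ).add_smul_sub_mem hwb hwu hs
      rwa [add_sub_cancel_left, ← Complex.coe_smul] at hcv
    have hTsub : T ⊆ interior (F '' K) := by
      refine hT.subset_of_closure_inter_subset isOpen_interior
        ⟨w, ⟨0, by simp, by simp⟩, hwi⟩ ?_
      rintro z ⟨hz, hzT⟩
      have hzK : z ∈ F '' K :=
        closure_minimal interior_subset hAc.isClosed hz
      refine hint z hzK (hTball hzT) ?_
      obtain ⟨s, -, rfl⟩ := hzT
      exact hwD s
    exact interior_subset (hTsub ⟨1, by simp, by simp⟩)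
  have hcl : a ∈ closure (D ∩ (interior (F '' K) ∩ ball (F x) ρ ∩
      {w | w + u ∈ ball (F x) ρ})) := by
    rw [mem_closure_iff_nhds]
    intro t ht
    obtain ⟨z, hzt, hzD⟩ := hD.inter_nhds_nonempty (inter_mem ht hN)
    exact ⟨z, hzD.1, hzt, hzD.2⟩
  have hfin := map_mem_closure (by fun_prop : Continuous fun w : X => w + u) hcl key
  rw [hAc.isClosed.closure_eq] at hfin
  simpa [hu] using hfin

/-- If `ψ ∘ F` is holomorphic on `W` and `F(W)` contains the open set `B`, then `ψ` is holomorphic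
on `B`, provided the Jacobian of `F` vanishes on no open set and `F` has discrete fibres. Openness
of `F` makes `ψ` continuous, and on a generic complex line `ψ` is holomorphic outside a countable
set, which is removable. -/
theorem differentiableOn_of_comp {Y : Type*} [NormedAddCommGroup Y] [NormedSpace ℂ Y]
    [CompleteSpace Y] {F : X → X} {U W B : Set X} (hU : IsOpen U)
    (hF : DifferentiableOn ℂ F U) (hne : ∀ x ∈ U, ∃ᶠ y in 𝓝 x, (fderiv ℂ F y).det ≠ 0)
    (hiso : ∀ x ∈ U, ∀ᶠ y in 𝓝[≠] x, F y ≠ F x) (hW : IsOpen W) (hWU : W ⊆ U)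
    (hB : IsOpen B) {f ψ : X → Y} (hf : DifferentiableOn ℂ f W)
    (hsurj : ∀ w ∈ B, ∃ x ∈ W, F x = w) (hψ : ∀ x ∈ W, F x ∈ B → ψ (F x) = f x) :
    DifferentiableOn ℂ ψ B := by
  have hcont : ContinuousOn ψ B := by
    intro w hw
    refine ContinuousAt.continuousWithinAt ?_
    obtain ⟨x, hx, rfl⟩ := hsurj w hw
    intro N hN
    have hfc : ContinuousAt f x := hf.continuousOn.continuousAt (hW.mem_nhds hx)
    have hFc : ContinuousAt F x := hF.continuousOn.continuousAt (hU.mem_nhds (hWU hx))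
    rw [hψ x hx hw] at hN
    have hV : W ∩ f ⁻¹' N ∩ F ⁻¹' B ∈ 𝓝 x :=
      inter_mem (inter_mem (hW.mem_nhds hx) (hfc hN)) (hFc (hB.mem_nhds hw))
    rw [mem_map]
    refine mem_of_superset
      (image_mem_nhds_of_isolated hU hF hne (hWU hx) (hiso x (hWU hx)) hV) ?_
    rintro _ ⟨y, ⟨⟨hyW, hyN⟩, hyB⟩, rfl⟩
    change ψ (F y) ∈ N
    rw [hψ y hyW hyB]
    exact hyN
  have hreg : ∀ w ∈ B, w ∉ F '' critSet F U → DifferentiableAt ℂ ψ w := by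
    intro w hw hwZ
    obtain ⟨x, hx, rfl⟩ := hsurj w hw
    have hdet : (fderiv ℂ F x).det ≠ 0 := fun h => hwZ ⟨x, ⟨hWU hx, h⟩, rfl⟩
    obtain ⟨χ, hχ, hχd, hχr, -⟩ := exists_local_inverse hU hF (hWU hx) hdet
    have hev : ∀ᶠ v in 𝓝 (F x), χ v ∈ W :=
      hχd.self_of_nhds.continuousAt (by rw [hχ]; exact hW.mem_nhds hx)
    have heq : ψ =ᶠ[𝓝 (F x)] f ∘ χ := by
      filter_upwards [hχr, hev, hB.mem_nhds hw] with v h1 h2 h3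
      have := hψ (χ v) h2 (by rwa [h1])
      rwa [h1] at this
    refine DifferentiableAt.congr_of_eventuallyEq ?_ heq
    refine DifferentiableAt.comp _ ?_ hχd.self_of_nhds
    rw [hχ]
    exact hf.differentiableAt (hW.mem_nhds hx)
  refine differentiableOn_of_lines hB hcont fun x hx u => ?_
  by_cases hu : u = 0
  · simp [hu]
  set G := {w : X | {t : ℂ | w + t • u ∈ F '' critSet F U}.Countable} with hG
  have hGd : Dense G := dense_countable_slices hU hF hne hu
  obtain ⟨ε, hε, hεB⟩ := Metric.isOpen_iff.1 hB x hx
  have hu' : 0 < ‖u‖ := norm_pos_iff.2 hu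
  -- radius for which short complex lines in the direction `u` starting near `x` stay in `B`
  let R : NNReal := ⟨ε / 2 / ‖u‖, by positivity⟩
  have hR : 0 < R := by
    change (0 : ℝ) < ε / 2 / ‖u‖
    positivity
  have hmem : ∀ w ∈ ball x (ε / 2), ∀ t ∈ closedBall (0 : ℂ) R, w + t • u ∈ B := by
    intro w hw t ht
    refine hεB ?_
    rw [mem_ball_iff_norm] at hw ⊢
    rw [mem_closedBall_zero_iff] at ht
    have h1 : ‖t • u‖ ≤ ε / 2 := by
      rw [norm_smul, ← le_div_iff₀ hu']
      exact ht
    calc ‖w + t • u - x‖ = ‖(w - x) + t • u‖ := by congr 1; abel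
      _ ≤ ‖w - x‖ + ‖t • u‖ := norm_add_le _ _
      _ < ε := by linarith
  have hslice : ∀ w ∈ G ∩ ball x (ε / 2),
      DifferentiableOn ℂ (fun t : ℂ => ψ (w + t • u)) (ball 0 R) := by
    rintro w ⟨hwG, hwb⟩
    have hps := Complex.hasFPowerSeriesOnBall_of_differentiable_off_countable
      (f := fun t : ℂ => ψ (w + t • u)) (c := 0) (R := R) hwG ?_ ?_ hR
    · have := hps.differentiableOn
      rwa [Metric.eball_coe] at this
    · exact hcont.comp (by fun_prop) fun t ht => hmem w hwb t ht
    · rintro t ⟨ht, htG⟩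
      have h1 := hreg (w + t • u) (hmem w hwb t (ball_subset_closedBall ht)) htG
      exact DifferentiableAt.comp (f := fun t : ℂ => w + t • u) t h1 (by fun_prop)
  have hlim : TendstoLocallyUniformlyOn (fun (w : X) (t : ℂ) => ψ (w + t • u))
      (fun t => ψ (x + t • u)) (𝓝[G] x) (ball 0 R) := by
    refine tendstoLocallyUniformlyOn_of_continuousAt (h := fun (w : X) (t : ℂ) => ψ (w + t • u))
      nhdsWithin_le_nhds fun t ht => ?_
    have h1 : ContinuousAt ψ (x + t • u) := hcont.continuousAt
      (hB.mem_nhds (hmem x (mem_ball_self (by positivity)) t (ball_subset_closedBall ht)))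
    exact ContinuousAt.comp (f := fun q : X × ℂ => q.1 + q.2 • u) (x := (x, t)) h1 (by fun_prop)
  have : (𝓝[G] x).NeBot := mem_closure_iff_nhdsWithin_neBot.1 (hGd x)
  have hdiff := hlim.differentiableOn (by
    filter_upwards [self_mem_nhdsWithin,
      mem_nhdsWithin_of_mem_nhds (ball_mem_nhds x (by positivity : 0 < ε / 2))] with w h1 h2
    exact hslice w ⟨h1, h2⟩) isOpen_ball
  exact hdiff.differentiableAt (isOpen_ball.mem_nhds (mem_ball_self hR))

end Extension

/-! ### The pseudoellipsoid and the map `φ^(p)` -/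

section Application
variable {n k : ℕ} (hk : k ≤ n) (p : Fin k → ℕ)

lemma isOpen_pseudoEllipsoid : IsOpen (pseudoEllipsoid n k hk p) := by
  unfold pseudoEllipsoid
  exact isOpen_lt (by fun_prop) continuous_const

lemma convex_pseudoEllipsoid : Convex ℝ (pseudoEllipsoid n k hk p) := by
  have hc : ∀ (j : Fin n) (q : ℕ), ConvexOn ℝ univ fun z : Cn n => ‖z j‖ ^ q := by
    intro j q
    let l : Cn n →ₗ[ℝ] ℂ := (EuclideanSpace.proj (𝕜 := ℂ) j : Cn n →L[ℂ] ℂ).restrictScalars ℝ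
    have h1 : ConvexOn ℝ univ fun z : Cn n => ‖z j‖ :=
      (convexOn_univ_norm (E := ℂ)).comp_linearMap l
    exact h1.pow (fun _ _ => norm_nonneg _) q
  have hsum : ∀ (N : ℕ) (f : Fin N → Cn n → ℝ), (∀ i, ConvexOn ℝ univ (f i)) →
      ConvexOn ℝ univ fun z => ∑ i, f i z := by
    intro N f hf
    induction N with
    | zero => simpa using convexOn_const (0 : ℝ) convex_univ
    | succ N ih =>
      simp only [Fin.sum_univ_succ]
      exact (hf 0).add (ih _ fun i => hf i.succ)
  have h : ConvexOn ℝ univ fun z : Cn n =>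
      (∑ j : Fin (n - k), ‖z (Fin.castLE (Nat.sub_le n k) j)‖ ^ 2)
      + ∑ i : Fin k, ‖z ⟨n - k + (i : ℕ), by have := i.isLt; omega⟩‖ ^ (2 * p i) :=
    (hsum _ _ fun j => hc _ 2).add (hsum _ _ fun i => hc _ _)
  simpa [pseudoEllipsoid] using h.convex_lt 1

lemma phiMap_apply (z : Cn n) (j : Fin n) : phiMap n k hk p z j =
    if _h : (j : ℕ) < n - k then z j
    else z j ^ (p ⟨(j : ℕ) - (n - k), by have := j.isLt; omega⟩) := rfl

lemma differentiable_phiMap : Differentiable ℂ (phiMap n k hk p) := by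
  rw [differentiable_euclidean]
  intro j
  simp only [phiMap_apply]
  split_ifs <;> fun_prop

/-- `φ^(p)` maps the pseudoellipsoid into the unit ball: `‖φ(z)‖²` is its defining function. -/
lemma phiMap_mem_ball {z : Cn n} (hz : z ∈ pseudoEllipsoid n k hk p) :
    phiMap n k hk p z ∈ ball (0 : Cn n) 1 := by
  have hsum : ∀ f : Fin n → ℝ, ∑ j, f j =
      (∑ j : Fin (n - k), f (Fin.castLE (Nat.sub_le n k) j))
      + ∑ i : Fin k, f ⟨n - k + (i : ℕ), by have := i.isLt; omega⟩ := by
    intro f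
    have e : n - k + k = n := Nat.sub_add_cancel hk
    rw [← (finCongr e).sum_comp f, Fin.sum_univ_add]
    rfl
  rw [mem_ball_zero_iff, ← sq_lt_one_iff₀ (norm_nonneg _), EuclideanSpace.norm_sq_eq, hsum]
  refine lt_of_eq_of_lt ?_ hz
  congr 1
  · refine Finset.sum_congr rfl fun j _ => ?_
    rw [phiMap_apply, dif_pos (by simp)]
  · refine Finset.sum_congr rfl fun i _ => ?_
    rw [phiMap_apply, dif_neg (by simp)]
    simp only [add_tsub_cancel_left, Fin.eta, norm_pow]
    rw [← pow_mul, mul_comm]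

lemma finite_preimage_phiMap (hp : ∀ i, 2 ≤ p i) {S : Set (Cn n)} (hS : S.Finite) :
    (phiMap n k hk p ⁻¹' S).Finite := by
  refine hS.preimage' fun y _ => ?_
  have hfin : (univ.pi fun j : Fin n => {c : ℂ | ∃ q ∈ insert 1 (range p), c ^ q = y j}).Finite := by
    refine Set.Finite.pi fun j => ?_
    have hq : (insert 1 (range p)).Finite := (finite_range p).insert 1
    have : {c : ℂ | ∃ q ∈ insert 1 (range p), c ^ q = y j} =
        ⋃ q ∈ insert 1 (range p), {c : ℂ | c ^ q = y j} := by
      ext c; simp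
    rw [this]
    refine hq.biUnion fun q hq => ?_
    have hq0 : 0 < q := by
      rcases hq with rfl | ⟨i, rfl⟩
      · exact one_pos
      · have := hp i; omega
    refine ((Polynomial.nthRoots q (y j)).toFinset.finite_toSet).subset fun c hc => ?_
    simpa [Polynomial.mem_nthRoots hq0] using hc
  refine (hfin.preimage ((EuclideanSpace.equiv (Fin n) ℂ).injective.injOn)).subset ?_
  intro z hz
  have hz : phiMap n k hk p z = y := hz
  intro j _
  change ∃ q ∈ insert 1 (range p), z j ^ q = y j
  by_cases h : (j : ℕ) < n - k
  · refine ⟨1, mem_insert _ _, ?_⟩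
    rw [← hz, phiMap_apply, dif_pos h, pow_one]
  · refine ⟨p ⟨(j : ℕ) - (n - k), by have := j.isLt; omega⟩,
      mem_insert_of_mem _ (mem_range_self _), ?_⟩
    rw [← hz, phiMap_apply, dif_neg h]

/-- The identity principle on a convex open set, along complex lines. -/
lemma frequently_ne_zero_of_convex {X : Type*} [NormedAddCommGroup X] [NormedSpace ℂ X]
    {U : Set X} (hU : IsOpen U) (hconv : Convex ℝ U) {g : X → ℂ} (hg : DifferentiableOn ℂ g U)
    {x₁ : X} (hx₁ : x₁ ∈ U) (h1 : g x₁ ≠ 0) : ∀ x ∈ U, ∃ᶠ y in 𝓝 x, g y ≠ 0 := by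
  intro x hx hcon
  have hcon : ∀ᶠ y in 𝓝 x, g y = 0 := by simpa using hcon
  let T : Set ℂ := {t : ℂ | x + t • (x₁ - x) ∈ U}
  have hTo : IsOpen T := hU.preimage (by fun_prop : Continuous fun t : ℂ => x + t • (x₁ - x))
  have hTc : Convex ℝ T := by
    intro s hs t ht a b ha hb hab
    have := hconv hs ht ha hb hab
    have e : a • (x + s • (x₁ - x)) + b • (x + t • (x₁ - x)) =
        x + (a • s + b • t) • (x₁ - x) := by
      rw [smul_add, smul_add, add_smul, smul_assoc, smul_assoc]
      calc _ = (a + b) • x + (a • s • (x₁ - x) + b • t • (x₁ - x)) := by rw [add_smul]; abel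
        _ = _ := by rw [hab, one_smul]
    rwa [e] at this
  have hd : DifferentiableOn ℂ (fun t : ℂ => g (x + t • (x₁ - x))) T :=
    hg.comp (by fun_prop) fun t ht => ht
  have h0 : (fun t : ℂ => g (x + t • (x₁ - x))) =ᶠ[𝓝 0] 0 := by
    have hc : ContinuousAt (fun t : ℂ => x + t • (x₁ - x)) 0 := by fun_prop
    exact hc.eventually (p := fun y => g y = 0) (by simpa using hcon)
  have := (hd.analyticOnNhd hTo).eqOn_zero_of_preconnected_of_eventuallyEq_zero
    hTc.isPreconnected (by simpa [T] using hx) h0 (show (1 : ℂ) ∈ T by simpa [T] using hx₁)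
  exact h1 (by simpa using this)

lemma differentiable_evalAt (Q : MvPolynomial (Fin n) ℂ) : Differentiable ℂ (evalAt n Q) := by
  unfold evalAt
  induction Q using MvPolynomial.induction_on with
  | C a => simp
  | add f g hf hg => simp only [map_add]; exact hf.add hg
  | mul_X f i hf => simp only [map_mul, MvPolynomial.eval_X]; exact hf.mul (by fun_prop)

end Application

theorem psi_well_defined_implies_holomorphic
    (n k m : ℕ) (hn : 0 < n) (hk0 : 0 < k) (hk : k ≤ n) (hm : 1 < m)
    (p : Fin k → ℕ) (hp : ∀ i, 2 ≤ p i)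
    (F : Cn n → Cn n) (Ω : Set (Cn n)) (hΩ : IsOpen Ω) (hΩc : IsConnected Ω)
    (hFholo : DifferentiableOn ℂ F (pseudoEllipsoid n k hk p))
    (hFmaps : MapsTo F (pseudoEllipsoid n k hk p) Ω)
    (hFsurj : SurjOn F (pseudoEllipsoid n k hk p) Ω)
    (hFproper : ProperOn n F (pseudoEllipsoid n k hk p) Ω)
    (hFmult : HasMultiplicity n F (pseudoEllipsoid n k hk p) Ω m)
    (hFC1 : HasC1Extension n F (pseudoEllipsoid n k hk p))
    (Γ : Subgroup (Equiv.Perm (BallPt n))) (hΓ : IsFiniteBallAutSubgroup n Γ)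
    (hΓrel : ∀ (y y' : Cn n) (hy : y ∈ Metric.ball (0 : Cn n) 1),
      y' ∈ Metric.ball (0 : Cn n) 1 →
      (FRelated n k hk p F (pseudoEllipsoid n k hk p) Ω y y' ↔
        ∃ g ∈ Γ, ((g ⟨y, hy⟩ : BallPt n) : Cn n) = y'))
    (C : ChevalleyData n hn Γ)
    (γ : Equiv.Perm (BallPt n)) (hγ : γ ∈ Γ)
    (w0 : Cn n) (δ : ℝ) (hδ : 0 < δ) (hball : Metric.ball w0 δ ⊆ Ω)
    (V0 : Set (Cn n)) (hV0open : IsOpen V0) (hV0 : V0 ⊆ Metric.ball (0 : Cn n) 1)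
    (hne : ∀ w ∈ Metric.ball w0 δ,
      (phiMap n k hk p '' (pseudoEllipsoid n k hk p ∩ F ⁻¹' {w}) ∩ V0).Nonempty)
    (ψ : Cn n → Cn n)
    (hψ : ∀ w ∈ Metric.ball w0 δ,
      ∀ z ∈ phiMap n k hk p '' (pseudoEllipsoid n k hk p ∩ F ⁻¹' {w}) ∩ V0,
      ∀ hz : z ∈ Metric.ball (0 : Cn n) 1,
        ψ w = C.map ((γ ⟨z, hz⟩ : BallPt n) : Cn n)) :
    DifferentiableOn ℂ ψ (Metric.ball w0 δ) := by
  set E := pseudoEllipsoid n k hk p with hE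
  set φ := phiMap n k hk p with hφ
  have hEo : IsOpen E := isOpen_pseudoEllipsoid hk p
  have hφd : Differentiable ℂ φ := differentiable_phiMap hk p
  have hφb : ∀ z ∈ E, φ z ∈ ball (0 : Cn n) 1 := fun z hz => phiMap_mem_ball hk p hz
  -- a single orbit of the finite group `Γ` contains `φ` of the whole fibre
  have hfib : ∀ x ∈ E, (E ∩ F ⁻¹' {F x}).Finite := by
    intro x hx
    have hS : ((fun g : Equiv.Perm (BallPt n) => ((g ⟨φ x, hφb x hx⟩ : BallPt n) : Cn n)) ''
        (Γ : Set (Equiv.Perm (BallPt n)))).Finite := hΓ.1.image _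
    refine (finite_preimage_phiMap hk p hp hS).subset ?_
    rintro y ⟨hy, hyx⟩
    obtain ⟨g, hg, hgy⟩ := (hΓrel (φ x) (φ y) (hφb x hx) (hφb y hy)).1
      ⟨F x, hFmaps hx, ⟨x, ⟨hx, rfl⟩, rfl⟩, ⟨y, ⟨hy, hyx⟩, rfl⟩⟩
    exact ⟨g, hg, hgy⟩
  have hiso : ∀ x ∈ E, ∀ᶠ y in 𝓝[≠] x, F y ≠ F x := by
    intro x hx
    have h1 : ((E ∩ F ⁻¹' {F x}) \ {x})ᶜ ∈ 𝓝 x :=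
      ((hfib x hx).subset sdiff_subset).isClosed.isOpen_compl.mem_nhds (by simp)
    rw [eventually_nhdsWithin_iff]
    filter_upwards [h1, hEo.mem_nhds hx] with y hy hyE hyx hFy
    exact hy ⟨⟨hyE, hFy⟩, hyx⟩
  -- by Sard, the Jacobian cannot vanish identically because `F(E) = Ω` has positive measure
  obtain ⟨x₁, hx₁, hdet⟩ : ∃ x ∈ E, (fderiv ℂ F x).det ≠ 0 := by
    by_contra! hcon
    have h1 := measure_image_critSet (volume : Measure (Cn n)) hEo hFholo
    have h2 : Ω ⊆ F '' critSet F E := fun w hw => by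
      obtain ⟨x, hx, rfl⟩ := hFsurj hw
      exact ⟨x, ⟨hx, hcon x hx⟩, rfl⟩
    exact (hΩ.measure_pos volume hΩc.nonempty).ne' (measure_mono_null h2 h1)
  have hgen := frequently_ne_zero_of_convex hEo (convex_pseudoEllipsoid hk p)
    (differentiableOn_det_fderiv hEo hFholo) hx₁ hdet
  obtain ⟨gγ, hgγd, hgγ⟩ := hΓ.2 γ hγ
  obtain ⟨gh, hghd, hgh⟩ := C.hmap_aut.1
  have hgγb : MapsTo gγ (ball 0 1) (ball 0 1) := fun z hz => by
    rw [hgγ ⟨z, hz⟩]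
    exact (γ ⟨z, hz⟩).2
  let PP : Cn n → Cn n := fun z => (EuclideanSpace.equiv (Fin n) ℂ).symm fun i => evalAt n (C.P i) z
  have hPP : Differentiable ℂ PP := by
    rw [differentiable_euclidean]
    exact fun i => differentiable_evalAt (C.P i)
  have hmap : ∀ z (hz : z ∈ ball (0 : Cn n) 1),
      C.map ((γ ⟨z, hz⟩ : BallPt n) : Cn n) = PP (gh (gγ z)) := by
    intro z hz
    have h1 : gγ z = (γ ⟨z, hz⟩ : BallPt n) := hgγ ⟨z, hz⟩
    rw [h1, hgh]
    unfold ChevalleyData.map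
    rw [dif_pos (γ ⟨z, hz⟩).2]
  have hf : DifferentiableOn ℂ (fun x => PP (gh (gγ (φ x)))) (E ∩ φ ⁻¹' V0) := by
    refine hPP.comp_differentiableOn (hghd.comp (hgγd.comp hφd.differentiableOn ?_) ?_)
    · exact fun x hx => hφb x hx.1
    · exact fun x hx => hgγb (hφb x hx.1)
  refine differentiableOn_of_comp hEo hFholo hgen hiso
    (hEo.inter (hV0open.preimage hφd.continuous)) inter_subset_left isOpen_ball hf ?_ ?_
  · intro w hw
    obtain ⟨_, ⟨x, ⟨hx, hxw⟩, rfl⟩, hxV⟩ := hne w hw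
    exact ⟨x, ⟨hx, hxV⟩, hxw⟩
  · rintro x ⟨hx, hxV⟩ hFx
    rw [hψ (F x) hFx (φ x) ⟨⟨x, ⟨hx, rfl⟩, rfl⟩, hxV⟩ (hφb x hx), hmap]
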